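/- Suppose the instance (𝒳, ℋ, A, B) follows linear sequence dynamics with the ξ-weighted p-norm for some p ≥ 1. Then for every k ≥ 1, ξ_k · ‖A_{k-1} ∘ A_{k-2} ∘ ⋯ ∘ A_0‖ ≤ ‖A^k‖, where the left-hand norm is the operator norm on 𝒲 and the right-hand norm is the operator norm of A^k on ℋ. -/

import Mathlib

/-! The input `B x` sits at coordinate `0`, and `k` steps of the dynamics carry it to coordinate
`k`, where it reads `Φ k x`. The norm of a sequence dominates each of its weighted coordinates, so
`ξ_k ‖Φ k x‖ ≤ ‖Aᵏ (B x)‖`, and `‖B‖ ≤ 1` concludes. -/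

theorem le_rpow_tsum_rpow {ι : Type*} {f : ι → ℝ} {p : ℝ} (hp : 0 < p) (hf : ∀ i, 0 ≤ f i)
    (hs : Summable fun i => f i ^ p) (i : ι) : f i ≤ (∑' j, f j ^ p) ^ p⁻¹ := by
  have hfp : ∀ j, 0 ≤ f j ^ p := fun j => Real.rpow_nonneg (hf j) p
  rw [Real.le_rpow_inv_iff_of_pos (hf i) (tsum_nonneg hfp) hp]
  exact hs.le_tsum i fun j _ => hfp j

theorem apply_iterate_of_forall_apply_succ {X Y : Type*} {f : X → X} {π : ℕ → X → Y}
    {g φ : ℕ → Y → Y} (hf : ∀ n x, π (n + 1) (f x) = g n (π n x)) (hφ0 : ∀ y, φ 0 y = y)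
    (hφ : ∀ n y, φ (n + 1) y = g n (φ n y)) (n : ℕ) (x : X) :
    π n (f^[n] x) = φ n (π 0 x) := by
  induction n with
  | zero => rw [Function.iterate_zero_apply, hφ0]
  | succ n ih => rw [Function.iterate_succ_apply', hf, ih, hφ]

section

variable {𝕜 W H : Type*} [NontriviallyNormedField 𝕜]
  [SeminormedAddCommGroup W] [NormedSpace 𝕜 W] [SeminormedAddCommGroup H] [NormedSpace 𝕜 H]

theorem mul_opNorm_le_opNorm_of_forall {V : Type*} [SeminormedAddCommGroup V] [NormedSpace 𝕜 V]
    {S : V →L[𝕜] W} {T : V →L[𝕜] H} {c : ℝ} (h : ∀ x, c * ‖S x‖ ≤ ‖T x‖) :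
    c * ‖S‖ ≤ ‖T‖ := by
  obtain hc | hc := le_or_gt c 0
  · exact (mul_nonpos_of_nonpos_of_nonneg hc (norm_nonneg S)).trans (norm_nonneg T)
  · rw [← le_div_iff₀' hc]
    refine S.opNorm_le_bound (by positivity) fun x => ?_
    rw [div_mul_eq_mul_div, le_div_iff₀' hc]
    exact (h x).trans (T.le_opNorm x)

theorem stmt_2_general (A : H →L[𝕜] H) (B : W →L[𝕜] H) (hB : ‖B‖ ≤ 1) (xi : ℕ → ℝ)
    (coord : ℕ → H → W) (Aops : ℕ → W →L[𝕜] W)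
    (hcoord : ∀ i y, xi i * ‖coord i y‖ ≤ ‖y‖)
    (hAsucc : ∀ i y, coord (i + 1) (A y) = Aops i (coord i y))
    (hB0 : ∀ x, coord 0 (B x) = x)
    (Phi : ℕ → W →L[𝕜] W) (hPhi0 : Phi 0 = 1)
    (hPhiSucc : ∀ k, Phi (k + 1) = (Aops k).comp (Phi k)) (k : ℕ) :
    xi k * ‖Phi k‖ ≤ ‖A ^ k‖ := by
  have coord_pow (x : W) : coord k ((A ^ k) (B x)) = Phi k x := by
    rw [FunLike.coe_pow_eq_iterate,
      apply_iterate_of_forall_apply_succ (φ := fun n => Phi n) hAsucc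
        (fun y => by rw [hPhi0, one_apply_eq_self])
        (fun n y => by rw [hPhiSucc, ContinuousLinearMap.comp_apply]), hB0]
  calc xi k * ‖Phi k‖ ≤ ‖(A ^ k).comp B‖ :=
        mul_opNorm_le_opNorm_of_forall fun x => coord_pow x ▸ hcoord k ((A ^ k) (B x))
    _ ≤ ‖A ^ k‖ * ‖B‖ := (A ^ k).opNorm_comp_le B
    _ ≤ ‖A ^ k‖ := mul_le_of_le_one_right (norm_nonneg _) hB

end

/-- For an instance following linear sequence dynamics with the ξ-weighted
`p`-norm, for every `k ≥ 1` one has `ξ_k ⬝ ‖A_{k-1} ∘ ⋯ ∘ A_0‖ ≤ ‖Aᵏ‖`, where `Φ k`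
denotes the composition `A_{k-1} ∘ ⋯ ∘ A_0` (so `Φ 0 = id`, `Φ (k+1) = A_k ∘ Φ k`). -/
theorem stmt_2
    {W : Type*} [NormedAddCommGroup W] [InnerProductSpace ℝ W] [CompleteSpace W]
    {H : Type*} [NormedAddCommGroup H] [NormedSpace ℝ H] [CompleteSpace H]
    (A : H →L[ℝ] H) (B : W →L[ℝ] H) (hB : ‖B‖ ≤ 1)
    (p : ℝ) (hp : 1 ≤ p)
    (xi : ℕ → ℝ) (hxi0 : xi 0 = 1) (hxi : ∀ i, 0 ≤ xi i)
    (coord : ℕ → H →ₗ[ℝ] W) (Aops : ℕ → W →L[ℝ] W)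
    (hsummable : ∀ y : H, Summable fun i : ℕ => (xi i * ‖coord i y‖) ^ p)
    (hnorm : ∀ y : H, ‖y‖ = (∑' i : ℕ, (xi i * ‖coord i y‖) ^ p) ^ (1 / p))
    (hA0 : ∀ y : H, coord 0 (A y) = 0)
    (hAsucc : ∀ (y : H) (i : ℕ), coord (i + 1) (A y) = Aops i (coord i y))
    (hB0 : ∀ x : W, coord 0 (B x) = x)
    (hBsucc : ∀ (x : W) (i : ℕ), coord (i + 1) (B x) = 0)
    (Phi : ℕ → W →L[ℝ] W)
    (hPhi0 : Phi 0 = 1)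
    (hPhiSucc : ∀ k : ℕ, Phi (k + 1) = (Aops k).comp (Phi k)) :
    ∀ k : ℕ, 1 ≤ k → xi k * ‖Phi k‖ ≤ ‖A ^ k‖ := by
  have weighted_coord_le (i : ℕ) (y : H) : xi i * ‖coord i y‖ ≤ ‖y‖ := by
    rw [hnorm, one_div]
    exact le_rpow_tsum_rpow (f := fun j => xi j * ‖coord j y‖) (one_pos.trans_le hp)
      (fun j => mul_nonneg (hxi j) (norm_nonneg _)) (hsummable y) i
  exact fun k _ => stmt_2_general A B hB xi (fun i => coord i) Aops weighted_coord_le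
    (fun i y => hAsucc y i) hB0 Phi hPhi0 hPhiSucc k
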